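/- There exists a bounded sequence w = (w_n)_{n≥1} of nonzero scalars such that the weighted backward shift B_w on c₀ is upper frequently hypercyclic but not frequently hypercyclic. -/

import Mathlib

open Filter Topology
open scoped Classical ZeroAtInfty

/-- Upper density of a set of natural numbers. -/
noncomputable def upperDensity (A : Set ℕ) : ℝ :=
  Filter.limsup
    (fun N : ℕ => (((Finset.range (N + 1)).filter (fun n => n ∈ A)).card : ℝ) / ((N : ℝ) + 1))
    Filter.atTop

/-- Lower density of a set of natural numbers. -/
noncomputable def lowerDensity (A : Set ℕ) : ℝ :=
  Filter.liminf
    (fun N : ℕ => (((Finset.range (N + 1)).filter (fun n => n ∈ A)).card : ℝ) / ((N : ℝ) + 1))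
    Filter.atTop

/-- Upper Banach density of a set of natural numbers. -/
noncomputable def upperBanachDensity (A : Set ℕ) : ℝ :=
  ⨅ N : ℕ, ⨆ m : ℕ, (((Finset.Icc m (m + N)).filter (fun n => n ∈ A)).card : ℝ) / ((N : ℝ) + 1)

/-!
Write `W n` for the product of the first `n` weights, so that
`(B_w ^ n x) k = W (n + k) / W k * x (n + k)`. We take `W n = b ^ a n` with `1 < |b|`, where `a`
grows by at most `1` at each step, which keeps the weights bounded.

An orbit approximating finitely supported targets `z n` at the times `n ∈ E` is obtained by letting
`x` solve these constraints exactly between consecutive elements of `E`. The error at time `n` then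
comes from the later `m ∈ E` and is small if `a` is large at and just after the differences `m - n`;
moreover `x ∈ c₀` if `a` tends to infinity along `E`. The set `E` consists of rapidly growing
blocks `[2T, 4T)`: each block is devoted to one target `p`, at all multiples of the period
`8 ^ (p + 1)`. A target therefore has positive upper density, while the differences of elements of
`E` lie either near multiples of some `8 ^ (p + 1)`, or in an interval `[T, 5T)`. It is enough that
`a` is at least `3p` at the former, with `p` the target, and at least `3j` at the latter, with `j`
the index of the block.

Just before a block starts, these intervals have been negligible, and the multiples of `8 ^ (p + 1)`
with the ramps of length `3p` around them have density at most `2⁻ᵖ`. Hence the lower density of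
`{n | 3K < a n}` tends to `0` as `K` grows. This prevents frequent hypercyclicity: when `x n` is
small, `W n` must be large for `B_w ^ n x` to be away from `0`.
-/

section Hypercyclicity

variable {X : Type*} [TopologicalSpace X]

/-- Upper frequent hypercyclicity of a self-map: some orbit visits every nonempty open set along a
set of times of positive upper density. -/
def IsUpperFrequentlyHypercyclic (T : X → X) : Prop :=
  ∃ x, ∀ U : Set X, IsOpen U → U.Nonempty → 0 < upperDensity {n | T^[n] x ∈ U}

/-- Frequent hypercyclicity of a self-map: some orbit visits every nonempty open set along a
set of times of positive lower density. -/
def IsFrequentlyHypercyclic (T : X → X) : Prop :=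
  ∃ x, ∀ U : Set X, IsOpen U → U.Nonempty → 0 < lowerDensity {n | T^[n] x ∈ U}

end Hypercyclicity

section Density

/-- The proportion of `A` in `{0, …, N}`, whose upper and lower limits are the two densities. -/
noncomputable def partialDensity (A : Set ℕ) (N : ℕ) : ℝ :=
  (((Finset.range (N + 1)).filter (fun n => n ∈ A)).card : ℝ) / ((N : ℝ) + 1)

lemma partialDensity_nonneg (A : Set ℕ) (N : ℕ) : 0 ≤ partialDensity A N := by
  unfold partialDensity
  positivity

lemma partialDensity_le_one (A : Set ℕ) (N : ℕ) : partialDensity A N ≤ 1 := by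
  have h := Finset.card_filter_le (Finset.range (N + 1)) (fun n => n ∈ A)
  rw [Finset.card_range] at h
  exact div_le_one_of_le₀ (mod_cast h) (by positivity)

lemma isBoundedUnder_le_partialDensity (A : Set ℕ) :
    IsBoundedUnder (· ≤ ·) atTop (partialDensity A) :=
  isBoundedUnder_of ⟨1, partialDensity_le_one A⟩

lemma isBoundedUnder_ge_partialDensity (A : Set ℕ) :
    IsBoundedUnder (· ≥ ·) atTop (partialDensity A) :=
  isBoundedUnder_of ⟨0, partialDensity_nonneg A⟩

lemma partialDensity_sub_one (A : Set ℕ) {N : ℕ} (hN : 0 < N) :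
    partialDensity A (N - 1) = ((Finset.range N).filter (· ∈ A)).card / N := by
  obtain ⟨N, rfl⟩ := Nat.exists_eq_add_one.2 hN
  simp [partialDensity]

lemma le_upperDensity_of_frequently {A : Set ℕ} {δ : ℝ}
    (h : ∃ᶠ N in atTop, δ ≤ partialDensity A N) : δ ≤ upperDensity A :=
  le_limsup_of_frequently_le h (isBoundedUnder_le_partialDensity A)

lemma lowerDensity_le_of_frequently {A : Set ℕ} {δ : ℝ}
    (h : ∃ᶠ N in atTop, partialDensity A N ≤ δ) : lowerDensity A ≤ δ :=
  liminf_le_of_frequently_le h (isBoundedUnder_ge_partialDensity A)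

lemma upperDensity_mono {A B : Set ℕ} (h : A ⊆ B) : upperDensity A ≤ upperDensity B := by
  refine limsup_le_limsup (Eventually.of_forall fun N => ?_)
    (isBoundedUnder_ge_partialDensity A).isCoboundedUnder_le (isBoundedUnder_le_partialDensity B)
  dsimp only
  gcongr

lemma partialDensity_le_add {A B : Set ℕ} {n₀ : ℕ} (h : ∀ n, n₀ ≤ n → n ∈ A → n ∈ B) (N : ℕ) :
    partialDensity A N ≤ n₀ * (1 / ((N : ℝ) + 1)) + partialDensity B N := by
  have hsub : (Finset.range (N + 1)).filter (· ∈ A) ⊆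
      Finset.range n₀ ∪ (Finset.range (N + 1)).filter (· ∈ B) := by
    intro n
    simp only [Finset.mem_union, Finset.mem_filter, Finset.mem_range]
    rintro ⟨hN, hA⟩
    exact (lt_or_ge n n₀).imp_right fun hn => ⟨hN, h n hn hA⟩
  have hcard := (Finset.card_le_card hsub).trans (Finset.card_union_le _ _)
  rw [Finset.card_range] at hcard
  rw [mul_one_div, partialDensity, partialDensity, ← add_div]
  gcongr
  exact_mod_cast hcard

lemma lowerDensity_le_of_eventually_imp {A B : Set ℕ} (h : ∀ᶠ n in atTop, n ∈ A → n ∈ B) :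
    lowerDensity A ≤ lowerDensity B := by
  obtain ⟨n₀, hn₀⟩ := eventually_atTop.1 h
  have herr : Tendsto (fun N : ℕ => (n₀ : ℝ) * (1 / ((N : ℝ) + 1))) atTop (𝓝 0) := by
    simpa using tendsto_one_div_add_atTop_nhds_zero_nat.const_mul (n₀ : ℝ)
  set err := fun N : ℕ => (n₀ : ℝ) * (1 / ((N : ℝ) + 1))
  have hB_le := isBoundedUnder_le_partialDensity B
  have hB_ge := isBoundedUnder_ge_partialDensity B
  calc lowerDensity A ≤ liminf (err + partialDensity B) atTop :=
        liminf_le_liminf (Eventually.of_forall (partialDensity_le_add hn₀))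
          (isBoundedUnder_ge_partialDensity A)
          (isBoundedUnder_le_add herr.isBoundedUnder_le hB_le).isCoboundedUnder_ge
    _ ≤ limsup err atTop + liminf (partialDensity B) atTop :=
        liminf_add_le herr.isBoundedUnder_ge herr.isBoundedUnder_le hB_ge
          hB_le.isCoboundedUnder_ge
    _ = lowerDensity B := by
        rw [herr.limsup_eq, zero_add]
        rfl

end Density

section ZeroAtInfty

variable {α E : Type*} [TopologicalSpace α] [SeminormedAddCommGroup E]

lemma zeroAtInfty_norm_le {f : C₀(α, E)} {C : ℝ} (hC : 0 ≤ C) (h : ∀ a, ‖f a‖ ≤ C) : ‖f‖ ≤ C :=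
  (BoundedContinuousFunction.norm_le (f := f.toBCF) hC).2 h

lemma zeroAtInfty_norm_apply_le (f : C₀(α, E)) (a : α) : ‖f a‖ ≤ ‖f‖ :=
  f.toBCF.norm_coe_le_norm a

lemma continuous_zeroAtInfty_apply (a : α) : Continuous fun f : C₀(α, E) => f a :=
  LipschitzWith.continuous (K := 1) <| .of_dist_le_mul fun f g => by
    simpa [dist_eq_norm] using zeroAtInfty_norm_apply_le (f - g) a

lemma tendsto_zeroAtInfty_atTop (f : C₀(ℕ, E)) : Tendsto f atTop (𝓝 0) :=
  cocompact_eq_atTop (α := ℕ) ▸ f.zero_at_infty'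

end ZeroAtInfty

section NullSequence

/-- A sequence tending to `0`, as an element of `c₀`. -/
def nullSeq {E : Type*} [TopologicalSpace E] [Zero E] (f : ℕ → E)
    (hf : Tendsto f atTop (𝓝 0)) : C₀(ℕ, E) where
  toFun := f
  continuous_toFun := continuous_of_discreteTopology
  zero_at_infty' := cocompact_eq_atTop (α := ℕ) ▸ hf

@[simp]
lemma nullSeq_apply {E : Type*} [TopologicalSpace E] [Zero E] (f : ℕ → E)
    (hf : Tendsto f atTop (𝓝 0)) (n : ℕ) : nullSeq f hf n = f n :=
  rfl

variable {𝕜 : Type*} [NormedField 𝕜]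

/-- The `k`-th vector of the canonical basis of `c₀`. -/
noncomputable def unitVec (𝕜 : Type*) [NormedField 𝕜] (k : ℕ) : C₀(ℕ, 𝕜) :=
  nullSeq (Pi.single k 1) <| tendsto_const_nhds.congr' <| by
    filter_upwards [eventually_ne_atTop k] with n hn
    rw [Pi.single_eq_of_ne hn]

lemma unitVec_apply (k n : ℕ) : unitVec 𝕜 k n = if n = k then 1 else 0 :=
  Pi.single_apply k 1 n

lemma sum_smul_unitVec_apply (f : ℕ → 𝕜) (N n : ℕ) :
    (∑ k ∈ Finset.range N, f k • unitVec 𝕜 k) n = if n < N then f n else 0 := by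
  induction N with
  | zero => simp
  | succ N ih =>
    rw [Finset.sum_range_succ, ZeroAtInftyContinuousMap.add_apply, ih,
      ZeroAtInftyContinuousMap.smul_apply, unitVec_apply, smul_eq_mul]
    grind

lemma dense_span_range_unitVec :
    Dense (Submodule.span 𝕜 (Set.range (unitVec 𝕜)) : Set C₀(ℕ, 𝕜)) := by
  intro f
  rw [Metric.mem_closure_iff]
  intro ε hε
  obtain ⟨N, hN⟩ := Metric.tendsto_atTop.1 (tendsto_zeroAtInfty_atTop f) (ε / 2) (half_pos hε)
  refine ⟨∑ k ∈ Finset.range N, f k • unitVec 𝕜 k, Submodule.sum_smul_mem _ _ fun k _ =>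
    Submodule.subset_span ⟨k, rfl⟩, ?_⟩
  rw [dist_eq_norm]
  refine (zeroAtInfty_norm_le (half_pos hε).le fun n => ?_).trans_lt (half_lt_self hε)
  rw [ZeroAtInftyContinuousMap.sub_apply, sum_smul_unitVec_apply]
  split_ifs with hn
  · simpa using (half_pos hε).le
  · simpa using (hN n (not_lt.1 hn)).le

lemma eventually_eq_zero_of_mem_span_range_unitVec {f : C₀(ℕ, 𝕜)}
    (hf : f ∈ Submodule.span 𝕜 (Set.range (unitVec 𝕜))) : ∀ᶠ k in atTop, f k = 0 := by
  induction hf using Submodule.span_induction with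
  | mem f hf =>
    obtain ⟨n, rfl⟩ := hf
    filter_upwards [eventually_ne_atTop n] with k hk
    rw [unitVec_apply, if_neg hk]
  | zero => simp
  | add f g _ _ hf hg =>
    filter_upwards [hf, hg] with k hfk hgk
    simp [hfk, hgk]
  | smul c f _ hf =>
    filter_upwards [hf] with k hk
    simp [hk]

lemma exists_denseRange_eventually_eq_zero (𝕜 : Type*) [NormedField 𝕜]
    [TopologicalSpace.SeparableSpace 𝕜] :
    ∃ z : ℕ → C₀(ℕ, 𝕜), DenseRange z ∧ ∀ i, ∀ᶠ k in atTop, z i k = 0 := by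
  have hsep := (Set.countable_range (unitVec 𝕜)).isSeparable.span (R := 𝕜)
  obtain ⟨t, ht_span, ht_count, ht_dense⟩ := hsep.exists_countable_dense_subset
  have ht : Dense t := dense_closure.1 (dense_span_range_unitVec.mono ht_dense)
  obtain ⟨z, rfl⟩ := ht_count.exists_eq_range ht.nonempty
  exact ⟨z, ht, fun i => eventually_eq_zero_of_mem_span_range_unitVec (ht_span ⟨i, rfl⟩)⟩

/-- The unpairing of `p` lists every element of a dense sequence infinitely often, so it may be
postponed until `p` dominates its support, its norm and the required precision. -/
lemma exists_targetSeq (𝕜 : Type*) [NormedField 𝕜] [TopologicalSpace.SeparableSpace 𝕜] {β : ℝ}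
    (hβ : 1 < β) :
    ∃ y : ℕ → C₀(ℕ, 𝕜), (∀ p k, p < k → y p k = 0) ∧ (∀ p, ‖y p‖ ≤ β ^ p) ∧
      ∀ U : Set C₀(ℕ, 𝕜), IsOpen U → U.Nonempty →
        ∃ p, Metric.closedBall (y p) (β⁻¹ ^ p) ⊆ U := by
  have hβ₀ : 0 < β := one_pos.trans hβ
  obtain ⟨z, hz_dense, hz_supp⟩ := exists_denseRange_eventually_eq_zero 𝕜
  let Admissible (i p : ℕ) : Prop := (∀ k, p < k → z i k = 0) ∧ ‖z i‖ ≤ β ^ p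
  have hadm (i : ℕ) : ∀ᶠ p in atTop, Admissible i p := by
    filter_upwards [eventually_forall_ge_atTop.2 (hz_supp i),
      (tendsto_pow_atTop_atTop_of_one_lt hβ).eventually_ge_atTop ‖z i‖] with p hsupp hnorm
    exact ⟨fun k hk => hsupp k hk.le, hnorm⟩
  refine ⟨fun p => if Admissible p.unpair.1 p then z p.unpair.1 else 0,
    fun p k hk => ?_, fun p => ?_, fun U hU hne => ?_⟩ <;> dsimp only
  · split_ifs with h
    exacts [h.1 k hk, rfl]
  · split_ifs with h
    exacts [h.2, norm_zero.trans_le (pow_nonneg hβ₀.le p)]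
  · obtain ⟨i, hi⟩ := hz_dense.exists_mem_open hU hne
    obtain ⟨r, hr, hball⟩ := Metric.isOpen_iff.1 hU _ hi
    have hsmall : ∀ᶠ p : ℕ in atTop, β⁻¹ ^ p < r :=
      (tendsto_pow_atTop_nhds_zero_of_lt_one (by positivity) (inv_lt_one_of_one_lt₀ hβ)).eventually
        (gt_mem_nhds hr)
    have hpair : Tendsto (Nat.pair i) atTop atTop :=
      tendsto_atTop_mono (Nat.right_le_pair i) tendsto_id
    obtain ⟨N, hN, hNr⟩ := (hpair.eventually ((hadm i).and hsmall)).exists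
    refine ⟨Nat.pair i N, ?_⟩
    rw [Nat.unpair_pair, if_pos hN]
    exact (Metric.closedBall_subset_ball hNr).trans hball

end NullSequence

section WeightedShift

variable {𝕜 : Type*} [NormedField 𝕜]

/-- The weighted backward shift `B_w` on `c₀`. The weights are indexed by `n ≥ 1`: the value `w 0`
does not enter the operator. -/
noncomputable def weightedShift (w : ℕ → 𝕜) {C : ℝ} (hw : ∀ n, ‖w n‖ ≤ C) :
    C₀(ℕ, 𝕜) →L[𝕜] C₀(ℕ, 𝕜) :=
  LinearMap.mkContinuous
    { toFun := fun x => nullSeq (fun n => w (n + 1) * x (n + 1)) <|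
        isBoundedUnder_le_mul_tendsto_zero (isBoundedUnder_of ⟨C, fun n => hw (n + 1)⟩)
          ((tendsto_add_atTop_iff_nat 1).2 (tendsto_zeroAtInfty_atTop x))
      map_add' := fun x y => by ext n; simp [mul_add]
      map_smul' := fun c x => by ext n; simp [mul_left_comm] }
    C fun x => by
      have hC : 0 ≤ C := (norm_nonneg _).trans (hw 0)
      refine zeroAtInfty_norm_le (by positivity) fun n => ?_
      refine (norm_mul_le _ _).trans ?_
      gcongr
      exacts [hw (n + 1), zeroAtInfty_norm_apply_le x (n + 1)]

lemma weightedShift_apply (w : ℕ → 𝕜) {C : ℝ} (hw : ∀ n, ‖w n‖ ≤ C) (x : C₀(ℕ, 𝕜)) (n : ℕ) :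
    weightedShift w hw x n = w (n + 1) * x (n + 1) :=
  rfl

/-- `W` is a sequence of partial products of the weights `w`, normalised arbitrarily: the
diagonal map `(x n) ↦ (W n * x n)` conjugates the weighted shift to the unweighted one. -/
structure IsWeightProduct (w W : ℕ → 𝕜) : Prop where
  ne_zero : ∀ n, W n ≠ 0
  succ : ∀ n, W (n + 1) = w (n + 1) * W n

variable {w W : ℕ → 𝕜} {C : ℝ} (hw : ∀ n, ‖w n‖ ≤ C)

lemma weightedShift_iterate_apply (hW : IsWeightProduct w W) (n : ℕ) (x : C₀(ℕ, 𝕜)) (k : ℕ) :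
    (weightedShift w hw)^[n] x k = W (n + k) / W k * x (n + k) := by
  induction n generalizing k with
  | zero => simp [hW.ne_zero k]
  | succ n ih =>
    have hk := hW.ne_zero k
    have hk' := hW.ne_zero (k + 1)
    rw [Function.iterate_succ_apply', weightedShift_apply, ih, show n + 1 + k = n + (k + 1) by ring]
    field_simp
    rw [hW.succ k]
    ring

/-- In order for `‖(B_w ^ n x) 0‖` to exceed `1 / 2`, the weight product `W n` has to be large when
`x n` is small, so the visit times to this open set have smaller density than `{n | K < ‖W n‖}`. -/
theorem not_isFrequentlyHypercyclic_weightedShift (hW : IsWeightProduct w W)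
    (hdens : ∀ ε > 0, ∃ K, lowerDensity {n | K < ‖W n‖} < ε) :
    ¬ IsFrequentlyHypercyclic (weightedShift w hw) := by
  rintro ⟨x, hx⟩
  have hopen : IsOpen {z : C₀(ℕ, 𝕜) | 1 / 2 < ‖z 0‖} :=
    isOpen_lt continuous_const (continuous_zeroAtInfty_apply 0).norm
  have hmem : unitVec 𝕜 0 ∈ {z : C₀(ℕ, 𝕜) | 1 / 2 < ‖z 0‖} := by
    change 1 / 2 < ‖_‖
    rw [unitVec_apply, if_pos rfl, norm_one]
    exact one_half_lt_one
  obtain ⟨K, hK⟩ := hdens _ (hx _ hopen ⟨_, hmem⟩)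
  refine hK.not_ge (lowerDensity_le_of_eventually_imp ?_)
  have hW₀ : 0 < ‖W 0‖ := norm_pos_iff.2 (hW.ne_zero 0)
  have hsmall : ∀ᶠ n in atTop, ‖x n‖ < ‖W 0‖ / 2 / (|K| + 1) :=
    (tendsto_zeroAtInfty_atTop x).norm.eventually_lt_const (by rw [norm_zero]; positivity)
  filter_upwards [hsmall] with n hn hvisit
  change 1 / 2 < ‖_‖ at hvisit
  rw [weightedShift_iterate_apply hw hW, add_zero, norm_mul, norm_div,
    div_mul_eq_mul_div, lt_div_iff₀ hW₀] at hvisit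
  rw [lt_div_iff₀ (by positivity)] at hn
  by_contra! hle
  nlinarith [le_abs_self K, norm_nonneg (x n)]

/-- Each coordinate of `x` serves the last element of `E` before it. The orbit at time `n ∈ E`
then agrees with `z n` up to the next element of `E`, and the later blocks are damped by the
quotients of `W` in `hgap`. -/
theorem exists_norm_weightedShift_iterate_sub_le (hW : IsWeightProduct w W) {E : Set ℕ}
    {z : ℕ → C₀(ℕ, 𝕜)} {ε η : ℕ → ℝ} (hε : ∀ n, 0 ≤ ε n) (hη : Tendsto η atTop (𝓝 0))
    (hη₀ : ∀ k, 0 ≤ η k)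
    (hsupp : ∀ n ∈ E, ∀ m ∈ E, n < m → ∀ k, m ≤ n + k → z n k = 0)
    (hnull : ∀ m ∈ E, ∀ r, ‖W r * z m r‖ ≤ η (m + r) * ‖W (m + r)‖)
    (hgap : ∀ n ∈ E, ∀ m ∈ E, n < m → ∀ r, ‖W r * z m r‖ ≤ ε n * ‖W (m - n + r)‖) :
    ∃ x, ∀ n ∈ E, ‖(weightedShift w hw)^[n] x - z n‖ ≤ ε n := by
  let last (k : ℕ) : ℕ := Nat.findGreatest (· ∈ E) k
  let f (k : ℕ) : 𝕜 := if last k ∈ E then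
    W (k - last k) * z (last k) (k - last k) / W k else 0
  have hf : Tendsto f atTop (𝓝 0) := by
    refine squeeze_zero_norm (fun k => ?_) hη
    dsimp only [f]
    split_ifs with hm
    · have h := hnull _ hm (k - last k)
      rw [Nat.add_sub_cancel' (Nat.findGreatest_le k)] at h
      rwa [norm_div, div_le_iff₀ (norm_pos_iff.2 (hW.ne_zero k))]
    · simpa using hη₀ k
  refine ⟨nullSeq f hf, fun n hn => zeroAtInfty_norm_le (hε n) fun s => ?_⟩
  have hm : last (n + s) ∈ E := Nat.findGreatest_spec (P := (· ∈ E)) (Nat.le_add_right n s) hn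
  have hn_le : n ≤ last (n + s) := Nat.le_findGreatest (Nat.le_add_right n s) hn
  have hm_le : last (n + s) ≤ n + s := Nat.findGreatest_le _
  have hs := norm_pos_iff.2 (hW.ne_zero s)
  rw [ZeroAtInftyContinuousMap.sub_apply, weightedShift_iterate_apply hw hW, nullSeq_apply]
  simp only [f, if_pos hm]
  rw [div_mul_div_comm, mul_comm (W s), mul_div_mul_left _ _ (hW.ne_zero (n + s))]
  generalize last (n + s) = m at *
  obtain rfl | hlt := hn_le.eq_or_lt
  · simpa [hW.ne_zero s] using hε n
  · have h := hgap n hn m hm hlt (n + s - m)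
    rw [hsupp n hn m hm hlt s hm_le, sub_zero, norm_div, div_le_iff₀ hs]
    rwa [show m - n + (n + s - m) = s by lia] at h

end WeightedShift

section RampEnvelope

/-- The envelope of a set `P` of peaks (`P c v` is a peak of height `v` at the point `c`): each peak
is approached along a ramp of slope `1`, and the envelope at `n` is the greatest value of the ramps
over `n`. Ramps are cut off at `n`, so that the supremum is finite and the envelope starts at
`0`. -/
noncomputable def rampEnvelope (P : ℕ → ℕ → Prop) (n : ℕ) : ℕ :=
  Nat.findGreatest (fun k => ∃ c v, n ≤ c ∧ P c v ∧ k + (c - n) ≤ v) n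

variable {P : ℕ → ℕ → Prop}

lemma rampEnvelope_le_self (P : ℕ → ℕ → Prop) (n : ℕ) : rampEnvelope P n ≤ n :=
  Nat.findGreatest_le n

lemma le_rampEnvelope {c v : ℕ} (h : P c v) (hv : v ≤ c) : v ≤ rampEnvelope P c :=
  Nat.le_findGreatest hv ⟨c, v, le_rfl, h, by simp⟩

lemma exists_peak_of_rampEnvelope_pos {n : ℕ} (h : 0 < rampEnvelope P n) :
    ∃ c v, n ≤ c ∧ P c v ∧ rampEnvelope P n + (c - n) ≤ v :=
  Nat.findGreatest_of_ne_zero (m := rampEnvelope P n) rfl h.ne'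

lemma rampEnvelope_succ_le (P : ℕ → ℕ → Prop) (n : ℕ) :
    rampEnvelope P (n + 1) ≤ rampEnvelope P n + 1 := by
  rcases (rampEnvelope P (n + 1)).eq_zero_or_pos with h | h
  · lia
  obtain ⟨c, v, hc, hP, hv⟩ := exists_peak_of_rampEnvelope_pos h
  have hself := rampEnvelope_le_self P (n + 1)
  have : rampEnvelope P (n + 1) - 1 ≤ rampEnvelope P n :=
    Nat.le_findGreatest (by lia) ⟨c, v, by lia, hP, by lia⟩
  lia

end RampEnvelope

section Times

/-- The distance between the times of a block at which the orbit approximates the `p`-th target. -/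
def period (p : ℕ) : ℕ := 8 ^ (p + 1)

/-- The order of magnitude of the times in the `j`-th block. -/
def scale (j : ℕ) : ℕ := 8 ^ j ^ 2

lemma period_pos (p : ℕ) : 0 < period p := by
  unfold period
  positivity

lemma scale_pos (j : ℕ) : 0 < scale j := by
  unfold scale
  positivity

lemma three_mul_add_four_mul_mul_two_pow_le_period (p : ℕ) :
    3 * p + 4 * p * 2 ^ p ≤ period p := by
  have hp : p < 2 ^ p := p.lt_two_pow_self
  have h8 : period p = 8 * (2 ^ p * 2 ^ p * 2 ^ p) := by
    rw [period, pow_succ', ← mul_pow, ← mul_pow]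
    norm_num
  rw [h8]
  generalize 2 ^ p = t at *
  have h1 : p * t ≤ t * t := Nat.mul_le_mul_right t hp.le
  have h2 : p ≤ p * t := Nat.le_mul_of_pos_right p (by lia)
  have h3 : t * t ≤ t * t * t := Nat.le_mul_of_pos_right _ (by lia)
  lia

lemma four_mul_lt_period (p : ℕ) : 4 * p < period p := by
  have h : p < 8 ^ p := Nat.lt_pow_self (by lia)
  rw [period, pow_succ']
  lia

lemma scale_mono : Monotone scale :=
  fun _ _ h => Nat.pow_le_pow_right (by lia) (Nat.pow_le_pow_left h 2)

lemma ten_mul_two_pow_mul_scale_le {K j : ℕ} (h : K < j) :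
    10 * 2 ^ K * scale j ≤ scale (j + 1) := by
  calc 10 * 2 ^ K * scale j ≤ 8 ^ 2 * 8 ^ K * scale j := Nat.mul_le_mul_right _ <|
        Nat.mul_le_mul (by norm_num) (Nat.pow_le_pow_left (by norm_num) K)
    _ = 8 ^ (K + 2) * scale j := by ring
    _ ≤ 8 ^ (2 * j + 1) * scale j :=
      Nat.mul_le_mul_right _ (Nat.pow_le_pow_right (by norm_num) (by lia))
    _ = scale (j + 1) := by
      rw [scale, scale, ← pow_add]
      ring

lemma eight_mul_scale_le_scale {i j : ℕ} (h : i < j) : 8 * scale i ≤ scale j := by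
  rw [scale, scale, ← pow_succ']
  exact Nat.pow_le_pow_right (by lia) (Nat.pow_lt_pow_left h two_ne_zero)

lemma six_mul_le_scale (j : ℕ) : 6 * j ≤ scale j := by
  induction j with
  | zero => simp
  | succ j ih =>
    have := eight_mul_scale_le_scale j.lt_add_one
    have := scale_pos j
    lia

/-- The index of the block of size `scale j` containing a given time. -/
def blockIndex (m : ℕ) : ℕ := Nat.sqrt (Nat.log 8 m)

lemma blockIndex_mono : Monotone blockIndex :=
  fun _ _ h => Nat.sqrt_le_sqrt (Nat.log_mono_right h)

lemma blockIndex_eq {m j : ℕ} (h₁ : scale j ≤ m) (h₂ : m < 8 * scale j) : blockIndex m = j := by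
  rw [scale, ← pow_succ'] at h₂
  rw [blockIndex, Nat.log_eq_of_pow_le_of_lt_pow h₁ h₂, Nat.sqrt_eq']

lemma tendsto_blockIndex_atTop : Tendsto blockIndex atTop atTop :=
  tendsto_atTop_atTop_of_monotone blockIndex_mono fun j =>
    ⟨scale j, (blockIndex_eq le_rfl (by have := scale_pos j; lia)).ge⟩

/-- The index of the target that the orbit approximates during the block of `m`. Each target
is assigned to infinitely many blocks. -/
def visitTarget (m : ℕ) : ℕ := (blockIndex m).unpair.1

lemma visitTarget_le_blockIndex (m : ℕ) : visitTarget m ≤ blockIndex m :=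
  Nat.unpair_left_le _

/-- The times at which the orbit approximates its target: the multiples of `period p` in
`[2 * scale j, 4 * scale j)`, where `p` is the target of the `j`-th block. -/
def visitTimes : Set ℕ :=
  {m | 2 * scale (blockIndex m) ≤ m ∧ m < 4 * scale (blockIndex m) ∧ period (visitTarget m) ∣ m}

lemma visitTarget_congr {n m : ℕ} (h : blockIndex n = blockIndex m) :
    visitTarget n = visitTarget m :=
  congrArg (fun j => j.unpair.1) h

lemma period_dvd_sub_of_blockIndex_eq {n m : ℕ} (hn : n ∈ visitTimes) (hm : m ∈ visitTimes)
    (h : blockIndex n = blockIndex m) : period (visitTarget m) ∣ m - n :=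
  Nat.dvd_sub hm.2.2 (visitTarget_congr h ▸ hn.2.2)

lemma add_visitTarget_lt {n m : ℕ} (hn : n ∈ visitTimes) (hm : m ∈ visitTimes) (hnm : n < m) :
    n + visitTarget n < m := by
  have hle := visitTarget_le_blockIndex n
  rcases (blockIndex_mono hnm.le).eq_or_lt with h | h
  · have hperiod := Nat.le_of_dvd (Nat.sub_pos_of_lt hnm) (period_dvd_sub_of_blockIndex_eq hn hm h)
    have htarget := visitTarget_congr h
    have := four_mul_lt_period (visitTarget m)
    lia
  · have := eight_mul_scale_le_scale h
    have := six_mul_le_scale (blockIndex n)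
    have := hn.2.1
    have := hm.1
    have := scale_pos (blockIndex n)
    lia

/-- The times at which the orbit approximates the `p`-th target. -/
def visitTimesTo (p : ℕ) : Set ℕ := {m ∈ visitTimes | visitTarget m = p}

lemma two_mul_scale_le_card_mul_period {p j : ℕ} (hj : j.unpair.1 = p)
    (hdvd : period p ∣ scale j) :
    2 * scale j ≤ ((Finset.range (4 * scale j)).filter (· ∈ visitTimesTo p)).card * period p := by
  obtain ⟨D, hD⟩ := hdvd
  have hscale := scale_pos j
  have hsub : (Finset.Ico (2 * D) (4 * D)).image (period p * ·) ⊆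
      (Finset.range (4 * scale j)).filter (· ∈ visitTimesTo p) := by
    intro m hm
    obtain ⟨q, hq, rfl⟩ := Finset.mem_image.1 hm
    obtain ⟨hq₁, hq₂⟩ := Finset.mem_Ico.1 hq
    have h₁ : 2 * scale j ≤ period p * q := by
      rw [hD, mul_left_comm]
      exact Nat.mul_le_mul_left _ hq₁
    have h₂ : period p * q < 4 * scale j := by
      rw [hD, mul_left_comm]
      exact Nat.mul_lt_mul_of_pos_left hq₂ (period_pos p)
    have hblock : blockIndex (period p * q) = j := blockIndex_eq (by lia) (by lia)
    have htarget : visitTarget (period p * q) = p := by rw [visitTarget, hblock, hj]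
    refine Finset.mem_filter.2 ⟨Finset.mem_range.2 h₂, ⟨?_, ?_, ?_⟩, htarget⟩
    exacts [hblock.symm ▸ h₁, hblock.symm ▸ h₂, htarget.symm ▸ dvd_mul_right _ _]
  have hcard := Finset.card_le_card hsub
  rw [Finset.card_image_of_injective _ (mul_right_injective₀ (period_pos p).ne'), Nat.card_Ico,
    show 4 * D - 2 * D = 2 * D by lia] at hcard
  calc 2 * scale j = 2 * D * period p := by rw [hD]; ring
    _ ≤ _ := Nat.mul_le_mul_right _ hcard

lemma upperDensity_visitTimesTo_pos (p : ℕ) : 0 < upperDensity (visitTimesTo p) := by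
  have hperiod : (0 : ℝ) < period p := mod_cast period_pos p
  suffices h : 1 / (2 * (period p : ℝ)) ≤ upperDensity (visitTimesTo p) from
    lt_of_lt_of_le (by positivity) h
  refine le_upperDensity_of_frequently (frequently_atTop.2 fun N => ?_)
  obtain ⟨j, hj, hpj, hNj⟩ : ∃ j, j.unpair.1 = p ∧ p ≤ j ∧ N + 2 ≤ j :=
    ⟨Nat.pair p (N + 2), by rw [Nat.unpair_pair], Nat.left_le_pair _ _, Nat.right_le_pair _ _⟩
  have hcard := two_mul_scale_le_card_mul_period hj (pow_dvd_pow 8 (by nlinarith))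
  have hscale := six_mul_le_scale j
  refine ⟨4 * scale j - 1, by lia, ?_⟩
  rw [partialDensity_sub_one _ (by lia), div_le_div_iff₀ (by positivity)
    (by norm_cast; lia), one_mul]
  exact_mod_cast (show 4 * scale j ≤ _ by lia)

end Times

section Exponent

/-- The times at which the exponent of the weights is at least `3 * p` because of the differences of
two visits within a block with target `p`. -/
def IsReturnTime (p c : ℕ) : Prop := period p ≤ c ∧ c % period p ≤ p

/-- The times at which the exponent of the weights is at least `3 * j` because of the visits of the
`j`-th block and their differences with those of earlier blocks. -/
def IsBlockTime (j c : ℕ) : Prop := scale j ≤ c ∧ c < 5 * scale j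

/-- The exponents of the weight products `b ^ exponent n`. -/
noncomputable def exponent : ℕ → ℕ :=
  rampEnvelope fun c v => ∃ p, v = 3 * p ∧ (IsReturnTime p c ∨ IsBlockTime p c)

lemma IsReturnTime.le_exponent {p c : ℕ} (h : IsReturnTime p c) : 3 * p ≤ exponent c :=
  le_rampEnvelope ⟨p, rfl, .inl h⟩ (by have := four_mul_lt_period p; have := h.1; lia)

lemma IsBlockTime.le_exponent {j c : ℕ} (h : IsBlockTime j c) : 3 * j ≤ exponent c :=
  le_rampEnvelope ⟨j, rfl, .inr h⟩ (by have := six_mul_le_scale j; have := h.1; lia)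

lemma two_mul_visitTarget_add_blockIndex_le_exponent {m r : ℕ} (hm : m ∈ visitTimes)
    (hr : r ≤ visitTarget m) : 2 * visitTarget m + blockIndex (m + r) ≤ exponent (m + r) := by
  obtain ⟨hm₁, hm₂, -⟩ := hm
  have htarget := visitTarget_le_blockIndex m
  have hscale := six_mul_le_scale (blockIndex m)
  have hblock : blockIndex (m + r) = blockIndex m := blockIndex_eq (by lia) (by lia)
  have hexp : 3 * blockIndex m ≤ exponent (m + r) := IsBlockTime.le_exponent ⟨by lia, by lia⟩
  lia

lemma two_mul_visitTarget_add_visitTarget_le_exponent {n m r : ℕ} (hn : n ∈ visitTimes)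
    (hm : m ∈ visitTimes) (hnm : n < m) (hr : r ≤ visitTarget m) :
    2 * visitTarget m + visitTarget n ≤ exponent (m - n + r) := by
  have hm_le := visitTarget_le_blockIndex m
  have hn_le := visitTarget_le_blockIndex n
  rcases (blockIndex_mono hnm.le).eq_or_lt with h | h
  · have hdvd := period_dvd_sub_of_blockIndex_eq hn hm h
    have hperiod := Nat.le_of_dvd (Nat.sub_pos_of_lt hnm) hdvd
    have htarget := visitTarget_congr h
    have hmod : (m - n + r) % period (visitTarget m) = r := by
      rw [Nat.add_mod, Nat.mod_eq_zero_of_dvd hdvd, zero_add, Nat.mod_mod, Nat.mod_eq_of_lt]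
      have := four_mul_lt_period (visitTarget m)
      lia
    have : IsReturnTime (visitTarget m) (m - n + r) := ⟨by lia, hmod.trans_le hr⟩
    have := this.le_exponent
    lia
  · have hgrowth := eight_mul_scale_le_scale h
    have := six_mul_le_scale (blockIndex m)
    have : IsBlockTime (blockIndex m) (m - n + r) := by
      have := hm.1
      have := hm.2.1
      have := hn.2.1
      constructor <;> lia
    have := this.le_exponent
    lia

/-- The times on the ramps towards the return times of `p`. -/
def nearReturnTimes (p : ℕ) : Set ℕ := {n | ∃ c, IsReturnTime p c ∧ n ≤ c ∧ c < n + 3 * p}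

/-- The times at which the exponent of the weights is greater than `3 * K`. -/
def highTimes (K : ℕ) : Set ℕ := {n | 3 * K < exponent n}

lemma exists_of_mem_highTimes {K n : ℕ} (h : n ∈ highTimes K) :
    ∃ p, K < p ∧ (n ∈ nearReturnTimes p ∨ scale p < n + 3 * p ∧ n < 5 * scale p) := by
  change 3 * K < exponent n at h
  obtain ⟨c, v, hnc, ⟨p, rfl, hpeak⟩, hv⟩ := exists_peak_of_rampEnvelope_pos (pos_of_gt h)
  change exponent n + (c - n) ≤ 3 * p at hv
  refine ⟨p, by lia, hpeak.imp (fun hret => ⟨c, hret, hnc, by lia⟩) fun hblock => ?_⟩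
  have := hblock.1
  have := hblock.2
  lia

lemma lt_of_mem_nearReturnTimes {p n : ℕ} (h : n ∈ nearReturnTimes p) : p < n := by
  obtain ⟨c, hc, -, hcn⟩ := h
  have := four_mul_lt_period p
  have := hc.1
  lia

lemma card_nearReturnTimes_mul_two_pow_le (p N : ℕ) :
    ((Finset.range N).filter (· ∈ nearReturnTimes p)).card * 2 ^ p ≤ N := by
  set M := period p
  set Q := (N + 3 * p) / M
  have hsub : (Finset.range N).filter (· ∈ nearReturnTimes p) ⊆
      (Finset.Icc 1 Q).biUnion fun q => Finset.Ioc (M * q - 3 * p) (M * q + p) := by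
    intro n hn
    obtain ⟨hnN, c, ⟨hMc, hmod⟩, hnc, hcn⟩ := Finset.mem_filter.1 hn
    have hdiv : M * (c / M) + c % M = c := Nat.div_add_mod c M
    have hpos : 0 < c / M := Nat.div_pos hMc (period_pos p)
    have hM : M ≤ M * (c / M) := Nat.le_mul_of_pos_right M hpos
    have hpM : 4 * p < M := four_mul_lt_period p
    simp only [Finset.mem_biUnion, Finset.mem_Icc, Finset.mem_Ioc]
    rw [Finset.mem_range] at hnN
    refine ⟨c / M, ⟨hpos, Nat.div_le_div_right (by lia)⟩, ?_, ?_⟩ <;> lia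
  have hcard := (Finset.card_le_card hsub).trans <|
    Finset.card_biUnion_le_card_mul _ _ (4 * p) fun q _ => by rw [Nat.card_Ioc]; lia
  rw [Nat.card_Icc, Nat.add_sub_cancel] at hcard
  calc _ ≤ Q * (4 * p) * 2 ^ p := by gcongr
    _ ≤ N := by
      rcases Q.eq_zero_or_pos with hQ | hQ
      · simp [hQ]
      have hM : 3 * p + 4 * p * 2 ^ p ≤ M := three_mul_add_four_mul_mul_two_pow_le_period p
      have hMQ : M * Q ≤ N + 3 * p := Nat.mul_div_le (N + 3 * p) M
      nlinarith

lemma range_filter_highTimes_subset (K j : ℕ) {N : ℕ} (hN : 2 * N ≤ scale (j + 1)) :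
    (Finset.range N).filter (· ∈ highTimes K) ⊆
      Finset.range (5 * scale j) ∪ (Finset.Ico (K + 1) N).biUnion fun p =>
        (Finset.range N).filter (· ∈ nearReturnTimes p) := by
  intro n hn
  obtain ⟨hnN, hexp⟩ := Finset.mem_filter.1 hn
  rw [Finset.mem_range] at hnN
  obtain ⟨p, hKp, hret | ⟨hlow, hupp⟩⟩ := exists_of_mem_highTimes hexp
  · have hpN : p < N := (lt_of_mem_nearReturnTimes hret).trans hnN
    exact Finset.mem_union_right _ <| Finset.mem_biUnion.2 ⟨p, Finset.mem_Ico.2 ⟨hKp, hpN⟩,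
      Finset.mem_filter.2 ⟨Finset.mem_range.2 hnN, hret⟩⟩
  · have hp : p ≤ j := by
      by_contra! hjp
      have := scale_mono (Nat.succ_le_of_lt hjp)
      have := six_mul_le_scale p
      lia
    exact Finset.mem_union_left _ <| Finset.mem_range.2 <|
      hupp.trans_le (Nat.mul_le_mul_left 5 (scale_mono hp))

lemma card_highTimes_le (K j : ℕ) {N : ℕ} (hN : 2 * N ≤ scale (j + 1)) :
    (((Finset.range N).filter (· ∈ highTimes K)).card : ℝ) ≤
      5 * scale j + N * (1 / 2) ^ K := by
  have hcard (p : ℕ) :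
      (((Finset.range N).filter (· ∈ nearReturnTimes p)).card : ℝ) ≤ N * (1 / 2) ^ p := by
    rw [one_div_pow, mul_one_div, le_div_iff₀ (by positivity)]
    exact_mod_cast card_nearReturnTimes_mul_two_pow_le p N
  have hgeom : ∑ p ∈ Finset.Ico (K + 1) N, (1 / 2 : ℝ) ^ p ≤ (1 / 2) ^ K := by
    refine (geom_sum_Ico_le_of_lt_one (by norm_num) (by norm_num)).trans_eq ?_
    rw [pow_succ]
    ring
  calc _ ≤ (5 * scale j : ℕ) + ∑ p ∈ Finset.Ico (K + 1) N,
        (((Finset.range N).filter (· ∈ nearReturnTimes p)).card : ℝ) := by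
        rw [← Finset.card_range (5 * scale j)]
        exact_mod_cast (Finset.card_le_card (range_filter_highTimes_subset K j hN)).trans <|
          (Finset.card_union_le _ _).trans <| Nat.add_le_add_left Finset.card_biUnion_le _
    _ ≤ 5 * scale j + ∑ p ∈ Finset.Ico (K + 1) N, N * (1 / 2 : ℝ) ^ p := by
        push_cast
        gcongr
        exact hcard _
    _ ≤ 5 * scale j + N * (1 / 2) ^ K := by
        rw [← Finset.mul_sum]
        gcongr

/-- Just before block `j + 1` starts, block `j` is negligible and only the return times count. -/
lemma lowerDensity_highTimes_le (K : ℕ) :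
    lowerDensity (highTimes K) ≤ 2 * (1 / 2) ^ K := by
  refine lowerDensity_le_of_frequently (frequently_atTop.2 fun N₀ => ?_)
  let j := K + N₀ + 1
  obtain ⟨N, hN⟩ : 2 ∣ scale (j + 1) := dvd_pow (by norm_num) (by positivity)
  have hgrowth : 10 * 2 ^ K * scale j ≤ scale (j + 1) :=
    ten_mul_two_pow_mul_scale_le (show K < j by lia)
  have hjN : 0 < N ∧ N₀ < N := by
    have := six_mul_le_scale (j + 1)
    lia
  refine ⟨N - 1, by lia, ?_⟩
  have hscale : (5 * scale j : ℝ) ≤ N * (1 / 2) ^ K := by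
    rw [one_div_pow, mul_one_div, le_div_iff₀ (by positivity)]
    have : 5 * scale j * 2 ^ K ≤ N := by nlinarith
    exact_mod_cast this
  rw [partialDensity_sub_one _ hjN.1, div_le_iff₀ (by exact_mod_cast hjN.1)]
  linarith [card_highTimes_le K j hN.ge]

end Exponent

section Construction

variable {𝕜 : Type*} [NormedField 𝕜] {b : 𝕜}

/-- The weights whose products are `b ^ exponent n`. -/
noncomputable def weight (b : 𝕜) (n : ℕ) : 𝕜 := b ^ exponent n / b ^ exponent (n - 1)

lemma weight_ne_zero (hb : b ≠ 0) (n : ℕ) : weight b n ≠ 0 :=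
  div_ne_zero (pow_ne_zero _ hb) (pow_ne_zero _ hb)

lemma isWeightProduct_weight (hb : b ≠ 0) :
    IsWeightProduct (weight b) (fun n => b ^ exponent n) where
  ne_zero _ := pow_ne_zero _ hb
  succ n := by rw [weight, Nat.add_sub_cancel, div_mul_cancel₀ _ (pow_ne_zero _ hb)]

lemma norm_weight_le (hb : 1 < ‖b‖) (n : ℕ) : ‖weight b n‖ ≤ ‖b‖ := by
  have hstep : exponent n ≤ exponent (n - 1) + 1 := by
    cases n with
    | zero => exact Nat.le_succ _
    | succ n => exact rampEnvelope_succ_le _ n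
  rw [weight, norm_div, norm_pow, norm_pow, div_le_iff₀ (by positivity), ← pow_succ']
  exact pow_le_pow_right₀ hb.le hstep

lemma norm_pow_exponent_mul_le (hb : 1 < ‖b‖) {f : C₀(ℕ, 𝕜)} {q i s r : ℕ}
    (hsupp : ∀ k, q < k → f k = 0) (hf : ‖f‖ ≤ ‖b‖ ^ q) (hs : r ≤ q → 2 * q + i ≤ s) :
    ‖b ^ exponent r * f r‖ ≤ ‖b‖⁻¹ ^ i * ‖b ^ s‖ := by
  have hb₀ : ‖b‖ ≠ 0 := (one_pos.trans hb).ne'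
  rcases lt_or_ge q r with hr | hr
  · rw [hsupp r hr, mul_zero, norm_zero]
    positivity
  calc ‖b ^ exponent r * f r‖ = ‖b‖ ^ exponent r * ‖f r‖ := by rw [norm_mul, norm_pow]
    _ ≤ ‖b‖ ^ q * ‖b‖ ^ q := by
        gcongr
        · exact hb.le
        · exact (rampEnvelope_le_self _ r).trans hr
        · exact (zeroAtInfty_norm_apply_le f r).trans hf
    _ = ‖b‖⁻¹ ^ i * ‖b‖ ^ (2 * q + i) := by
        rw [inv_pow, pow_add, mul_left_comm, inv_mul_cancel₀ (pow_ne_zero _ hb₀), mul_one, two_mul,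
          pow_add]
    _ ≤ ‖b‖⁻¹ ^ i * ‖b ^ s‖ := by
        rw [norm_pow]
        gcongr
        exacts [hb.le, hs hr]

theorem not_isFrequentlyHypercyclic_weightedShift_weight (hb : 1 < ‖b‖) :
    ¬ IsFrequentlyHypercyclic (weightedShift (weight b) (norm_weight_le hb)) := by
  have hb₀ : b ≠ 0 := norm_pos_iff.1 (one_pos.trans hb)
  refine not_isFrequentlyHypercyclic_weightedShift _ (isWeightProduct_weight hb₀) fun ε hε => ?_
  obtain ⟨K, hK⟩ := exists_pow_lt_of_lt_one (half_pos hε) (one_half_lt_one (α := ℝ))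
  have hset : {n | ‖b‖ ^ (3 * K) < ‖b ^ exponent n‖} = highTimes K := by
    ext n
    change ‖b‖ ^ (3 * K) < ‖b ^ exponent n‖ ↔ 3 * K < exponent n
    rw [norm_pow, pow_lt_pow_iff_right₀ hb]
  refine ⟨‖b‖ ^ (3 * K), ?_⟩
  rw [hset]
  linarith [lowerDensity_highTimes_le K]

theorem isUpperFrequentlyHypercyclic_weightedShift_weight [TopologicalSpace.SeparableSpace 𝕜]
    (hb : 1 < ‖b‖) :
    IsUpperFrequentlyHypercyclic (weightedShift (weight b) (norm_weight_le hb)) := by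
  have hb₀ : b ≠ 0 := norm_pos_iff.1 (one_pos.trans hb)
  have hinv : ‖b‖⁻¹ < 1 := inv_lt_one_of_one_lt₀ hb
  obtain ⟨y, hy_supp, hy_norm, hy_open⟩ := exists_targetSeq 𝕜 hb
  obtain ⟨x, hx⟩ := exists_norm_weightedShift_iterate_sub_le (norm_weight_le hb)
    (isWeightProduct_weight hb₀) (E := visitTimes) (z := fun n => y (visitTarget n))
    (ε := fun n => ‖b‖⁻¹ ^ visitTarget n) (η := fun k => ‖b‖⁻¹ ^ blockIndex k)
    (fun n => by positivity)
    ((tendsto_pow_atTop_nhds_zero_of_lt_one (by positivity) hinv).comp tendsto_blockIndex_atTop)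
    (fun k => by positivity)
    (fun n hn m hm hnm k hk => hy_supp _ _ (by have := add_visitTarget_lt hn hm hnm; lia))
    (fun m hm r => norm_pow_exponent_mul_le hb (hy_supp _) (hy_norm _) fun hr =>
      two_mul_visitTarget_add_blockIndex_le_exponent hm hr)
    (fun n hn m hm hnm r => norm_pow_exponent_mul_le hb (hy_supp _) (hy_norm _) fun hr =>
      two_mul_visitTarget_add_visitTarget_le_exponent hn hm hnm hr)
  refine ⟨x, fun U hU hne => ?_⟩
  obtain ⟨p, hp⟩ := hy_open U hU hne
  refine (upperDensity_visitTimesTo_pos p).trans_le (upperDensity_mono ?_)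
  rintro n ⟨hn, rfl⟩
  exact hp (mem_closedBall_iff_norm.2 (hx n hn))

end Construction

theorem exists_weightedShift_upperFrequentlyHC_not_frequentlyHC_general {𝕜 : Type*}
    [NontriviallyNormedField 𝕜] [TopologicalSpace.SeparableSpace 𝕜] :
    ∃ (w : ℕ → 𝕜) (Bw : C₀(ℕ, 𝕜) →L[𝕜] C₀(ℕ, 𝕜)),
      (∀ n, w n ≠ 0) ∧ (∃ C : ℝ, ∀ n, ‖w n‖ ≤ C) ∧
      (∀ (x : C₀(ℕ, 𝕜)) (n : ℕ), Bw x n = w (n + 1) * x (n + 1)) ∧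
      IsUpperFrequentlyHypercyclic Bw ∧ ¬ IsFrequentlyHypercyclic Bw := by
  obtain ⟨b, hb⟩ := NormedField.exists_one_lt_norm 𝕜
  have hb₀ : b ≠ 0 := norm_pos_iff.1 (one_pos.trans hb)
  exact ⟨weight b, weightedShift (weight b) (norm_weight_le hb), weight_ne_zero hb₀,
    ⟨‖b‖, norm_weight_le hb⟩, weightedShift_apply _ _,
    isUpperFrequentlyHypercyclic_weightedShift_weight hb,
    not_isFrequentlyHypercyclic_weightedShift_weight hb⟩

/-- There exists a bounded sequence `w` of nonzero scalars such that the weighted backward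
shift `B_w` on `c₀` (the continuous linear operator `Bw` with `(Bw x) n = w (n+1) * x (n+1)`)
is upper frequently hypercyclic but not frequently hypercyclic. -/
theorem exists_weightedShift_upperFrequentlyHC_not_frequentlyHC {𝕜 : Type*} [RCLike 𝕜] :
    ∃ (w : ℕ → 𝕜) (Bw : C₀(ℕ, 𝕜) →L[𝕜] C₀(ℕ, 𝕜)),
      (∀ n, w n ≠ 0) ∧ (∃ C : ℝ, ∀ n, ‖w n‖ ≤ C) ∧
      (∀ (x : C₀(ℕ, 𝕜)) (n : ℕ), Bw x n = w (n + 1) * x (n + 1)) ∧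
      (∃ x : C₀(ℕ, 𝕜), ∀ U : Set C₀(ℕ, 𝕜), IsOpen U → U.Nonempty →
        0 < upperDensity {n : ℕ | (⇑Bw)^[n] x ∈ U}) ∧
      ¬ (∃ x : C₀(ℕ, 𝕜), ∀ U : Set C₀(ℕ, 𝕜), IsOpen U → U.Nonempty →
        0 < lowerDensity {n : ℕ | (⇑Bw)^[n] x ∈ U}) :=
  exists_weightedShift_upperFrequentlyHC_not_frequentlyHC_general
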